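/- Fix d ≥ 2. Call a tuple (a, b, q) with a, b ∈ ℝ^d and q : {0,1}^d → ℝ feasible if: 0 ≤ a_i < b_i ≤ 1 for all i; 0 ≤ q_J − q_I ≤ b_ℓ − a_ℓ for all ℓ = 1,…,d and all I ∼_ℓ J; and max{0, G_d(x_I)} ≤ q_I ≤ H_d(x_I) for all I ∈ {0,1}^d, where x_I is the point with (x_I)_k = a_k if I_k = 0 and (x_I)_k = b_k if I_k = 1. Set V(q) = Σ_{I ∈ {0,1}^d} (−1)^{d−‖I‖₁} q_I. Suppose (a*, b*, q*) is feasible, V(q*) ≤ V(q) for every feasible (a, b, q), and b*_i = 1 for all i. Then V(q*) is the minimal Q-volume over all d-quasi-copulas and all d-boxes: V_Q(B) ≥ V(q*) for every d-quasi-copula Q and every d-box B ⊆ [0,1]^d, and there exist a d-quasi-copula Q and a d-box B ⊆ [0,1]^d with V_Q(B) = V(q*). -/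

import Mathlib

/-!
The minimum over quasi-copulas and the optimum of the linear program agree because feasible
tuples are exactly the vertex values of quasi-copulas on boxes.

* `feasible_of_isQuasiCopula`: the values of a quasi-copula at the vertices of a box are feasible.
  The edge inequalities are monotonicity and the Lipschitz condition along an edge; the bounds
  `G_d` and `H_d` come from the Lipschitz condition between `x` and `(1,…,1)`, and from
  monotonicity between `x` and `(1,…,x_i,…,1)`.
* `isQuasiCopula_extension`, `extension_vertex`: conversely, a feasible `q` is extended to the cube
  by the one-sided McShane formula
  `Q(x) = min (H_d(x), min_I (q_I + ∑ₖ (x_k - (x_I)_k)⁺))`.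
  Each term is nondecreasing and 1-Lipschitz for the `ℓ¹`-norm, hence so is `Q`. The term `H_d`
  forces the boundary conditions from above, `q_I ≥ max {0, G_d(x_I)}` shows that the other terms
  do not spoil them, and `Q(x_J) = q_J` because
  `q_J ≤ q_{I ∨ J} ≤ q_I + ∑ₖ ((x_J)_k - (x_I)_k)⁺` by the edge inequalities.

The minimality hypothesis then gives the lower bound, and the extension of the optimal tuple
attains it.
-/

namespace QC

/-- A point lies in the unit cube `[0,1]^d`. -/
def InCube {d : ℕ} (u : Fin d → ℝ) : Prop := ∀ i, u i ∈ Set.Icc (0:ℝ) 1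

/-- A `d`-quasi-copula: boundary conditions, monotonicity in each variable,
and the `ℓ¹`-Lipschitz condition, on the unit cube. -/
structure IsQuasiCopula (d : ℕ) (Q : (Fin d → ℝ) → ℝ) : Prop where
  mem : ∀ u, InCube u → Q u ∈ Set.Icc (0:ℝ) 1
  bc0 : ∀ u, InCube u → (∃ i, u i = 0) → Q u = 0
  bc1 : ∀ (i : Fin d), ∀ t ∈ Set.Icc (0:ℝ) 1,
      Q (fun j => if j = i then t else 1) = t
  mono : ∀ (i : Fin d) (u v : Fin d → ℝ), InCube u → InCube v →
      (∀ j, j ≠ i → u j = v j) → u i ≤ v i → Q u ≤ Q v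
  lip : ∀ u v, InCube u → InCube v → |Q u - Q v| ≤ ∑ i, |u i - v i|

/-- `‖I‖₁` for a multi-index `I ∈ {0,1}^d`. -/
def normOne {d : ℕ} (I : Fin d → Bool) : ℕ :=
  (Finset.univ.filter fun k => I k = true).card

/-- The vertex `x_I` of the box `Π [a_i, b_i]`. -/
def vertex {d : ℕ} (a b : Fin d → ℝ) (I : Fin d → Bool) : Fin d → ℝ :=
  fun k => if I k then b k else a k

/-- The `Q`-volume of the box `Π [a_i, b_i]`. -/
def boxVolume {d : ℕ} (Q : (Fin d → ℝ) → ℝ) (a b : Fin d → ℝ) : ℝ :=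
  ∑ I : Fin d → Bool, (-1 : ℝ) ^ (d - normOne I) * Q (vertex a b I)

/-- `Π [a_i, b_i]` is a `d`-box inside `[0,1]^d` with `a_i < b_i`. -/
def IsBox {d : ℕ} (a b : Fin d → ℝ) : Prop :=
  ∀ i, 0 ≤ a i ∧ a i < b i ∧ b i ≤ 1

/-- `G_d(x) = Σ x_i - d + 1`. -/
def Gd {d : ℕ} (x : Fin d → ℝ) : ℝ := (∑ i, x i) - d + 1

/-- `H_d(x) = min { x_1, …, x_d }`. -/
noncomputable def Hd {d : ℕ} (x : Fin d → ℝ) : ℝ := ⨅ i, x i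

/-- `I ∼_ℓ J` for multi-indices in `{0,1}^d`: `J - I = e^(ℓ)`. -/
def Adj2 {d : ℕ} (I J : Fin d → Bool) (ℓ : Fin d) : Prop :=
  I ℓ = false ∧ J ℓ = true ∧ ∀ k, k ≠ ℓ → I k = J k

/-- The grid point `x_I ∈ Π {a_i, 1}` for `I ∈ {0,1}^d`. -/
def xI2 {d : ℕ} (a : Fin d → ℝ) (I : Fin d → Bool) : Fin d → ℝ :=
  fun k => if I k then 1 else a k

/-- The grid point `x_I ∈ Π {a_i, b_i, 1}` for `I ∈ {0,1,2}^d`. -/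
def xI3 {d : ℕ} (a b : Fin d → ℝ) (I : Fin d → Fin 3) : Fin d → ℝ :=
  fun k => if I k = 0 then a k else if I k = 1 then b k else 1

/-- `I ∼_ℓ J` for multi-indices in `{0,1,2}^d`: `J - I = e^(ℓ)`. -/
def Adj3 {d : ℕ} (I J : Fin d → Fin 3) (ℓ : Fin d) : Prop :=
  ((J ℓ : ℕ) = (I ℓ : ℕ) + 1) ∧ ∀ k, k ≠ ℓ → I k = J k

/-- The extended domain `D^ext = Π {a_i,1} ∪ ⋃ L_i`, where
`L_i = { x ∈ [0,1]^d : x_i = 0 }`. -/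
def Dext2 {d : ℕ} (a : Fin d → ℝ) (x : Fin d → ℝ) : Prop :=
  (∃ I : Fin d → Bool, x = xI2 a I) ∨ (InCube x ∧ ∃ i, x i = 0)

/-- The extended domain `D^ext = Π {a_i,b_i,1} ∪ ⋃ L_i`. -/
def Dext3 {d : ℕ} (a b : Fin d → ℝ) (x : Fin d → ℝ) : Prop :=
  (∃ I : Fin d → Fin 3, x = xI3 a b I) ∨ (InCube x ∧ ∃ i, x i = 0)

/-- Feasibility for the linear programs (3.1)/(3.4) on the `2^d` grid. -/
def Feasible2 {d : ℕ} (a b : Fin d → ℝ) (q : (Fin d → Bool) → ℝ) : Prop :=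
  (∀ i, 0 ≤ a i ∧ a i < b i ∧ b i ≤ 1) ∧
  (∀ (ℓ : Fin d) (I J : Fin d → Bool), Adj2 I J ℓ →
      0 ≤ q J - q I ∧ q J - q I ≤ b ℓ - a ℓ) ∧
  (∀ I, max 0 (Gd (vertex a b I)) ≤ q I ∧ q I ≤ Hd (vertex a b I))

/-- The objective `V(q) = Σ_{I ∈ {0,1}^d} (-1)^(d-‖I‖₁) q_I`. -/
def Vq {d : ℕ} (q : (Fin d → Bool) → ℝ) : ℝ :=
  ∑ I : Fin d → Bool, (-1 : ℝ) ^ (d - normOne I) * q I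

/-- Feasibility for the linear program (3.3) on the `3^d` grid. -/
def Feasible3 {d : ℕ} (a b : Fin d → ℝ) (q : (Fin d → Fin 3) → ℝ) : Prop :=
  (∀ i, 0 ≤ a i ∧ a i < b i ∧ b i ≤ 1) ∧
  (∀ (ℓ : Fin d) (I J : Fin d → Fin 3), Adj3 I J ℓ → J ℓ = 1 →
      0 ≤ q J - q I ∧ q J - q I ≤ b ℓ - a ℓ) ∧
  (∀ (ℓ : Fin d) (I J : Fin d → Fin 3), Adj3 I J ℓ → J ℓ = 2 →
      0 ≤ q J - q I ∧ q J - q I ≤ 1 - b ℓ) ∧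
  (∀ I, max 0 (Gd (xI3 a b I)) ≤ q I ∧ q I ≤ Hd (xI3 a b I))

/-- The objective `V(q)` for the `3^d` grid: the sum runs over multi-indices
with entries in `{0,1}` only. -/
def Vq3 {d : ℕ} (q : (Fin d → Fin 3) → ℝ) : ℝ :=
  ∑ I : Fin d → Bool, (-1 : ℝ) ^ (d - normOne I) * q (fun k => if I k then 1 else 0)

/-- A point of a box all of whose coordinates are endpoints. -/
def IsVertexPoint {d : ℕ} (a b : Fin d → ℝ) (u : Fin d → ℝ) : Prop :=
  ∀ i, u i = a i ∨ u i = b i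

/-- A point lies in the box `Π [a_i, b_i]`. -/
def InBox {d : ℕ} (a b : Fin d → ℝ) (u : Fin d → ℝ) : Prop :=
  ∀ i, u i ∈ Set.Icc (a i) (b i)

/-- `F` is multilinear on the box `Π [a_i, b_i]`: affine separately in each
variable (on the box). -/
def MultilinearOnBox {d : ℕ} (a b : Fin d → ℝ) (F : (Fin d → ℝ) → ℝ) : Prop :=
  ∀ (i : Fin d) (u : Fin d → ℝ), InBox a b u →
    ∃ c e : ℝ, ∀ t ∈ Set.Icc (a i) (b i), F (Function.update u i t) = c * t + e

/-- Coordinatewise monotonicity, iterated, bounds a quasi-copula by each coordinate. -/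
theorem IsQuasiCopula.le_coord {d : ℕ} {Q : (Fin d → ℝ) → ℝ} (hQ : IsQuasiCopula d Q)
    {u : Fin d → ℝ} (hu : InCube u) (i : Fin d) : Q u ≤ u i := by
  have key : ∀ s : Finset (Fin d), Q u ≤ Q (fun k => if k ∈ s then 1 else u k) := by
    intro s
    induction s using Finset.induction_on with
    | empty => simp
    | insert ℓ s hℓ ih =>
      refine ih.trans (hQ.mono ℓ _ _ ?_ ?_ ?_ ?_)
      · intro k
        dsimp only
        split_ifs
        · simp
        · exact hu k
      · intro k
        dsimp only
        split_ifs
        · simp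
        · exact hu k
      · intro j hj
        simp [hj]
      · simpa [hℓ] using (hu ℓ).2
  have h := key (Finset.univ.erase i)
  have e : (fun k => if k ∈ Finset.univ.erase i then 1 else u k)
      = fun k => if k = i then u i else 1 := by
    funext k
    by_cases hk : k = i
    · subst hk; simp
    · simp [hk]
  rw [e, hQ.bc1 i (u i) (hu i)] at h
  exact h

theorem IsQuasiCopula.Gd_le {d : ℕ} (hd : 0 < d) {Q : (Fin d → ℝ) → ℝ} (hQ : IsQuasiCopula d Q)
    {u : Fin d → ℝ} (hu : InCube u) : Gd u ≤ Q u := by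
  have h1 : Q (fun _ => 1) = 1 := by
    simpa using hQ.bc1 ⟨0, hd⟩ 1 (by simp)
  have hl := hQ.lip (fun _ => 1) u (by intro k; simp) hu
  have e : ∑ i, |(1 : ℝ) - u i| = d - ∑ i, u i := by
    rw [Finset.sum_congr rfl fun i _ => abs_of_nonneg (sub_nonneg.2 (hu i).2)]
    simp
  rw [h1, e] at hl
  have := (abs_le.1 hl).2
  unfold Gd
  linarith

theorem IsBox.inCube_vertex {d : ℕ} {a b : Fin d → ℝ} (h : IsBox a b) (I : Fin d → Bool) :
    InCube (vertex a b I) := by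
  intro k
  obtain ⟨h0, h1, h2⟩ := h k
  unfold vertex
  split_ifs <;> constructor <;> linarith

theorem feasible_of_isQuasiCopula {d : ℕ} (hd : 0 < d) {Q : (Fin d → ℝ) → ℝ}
    (hQ : IsQuasiCopula d Q) {a b : Fin d → ℝ} (hB : IsBox a b) :
    Feasible2 a b (fun I => Q (vertex a b I)) := by
  refine ⟨hB, ?_, ?_⟩
  · rintro ℓ I J ⟨hI, hJ, hIJ⟩
    have hv : ∀ k, k ≠ ℓ → vertex a b I k = vertex a b J k := by
      intro k hk
      simp [vertex, hIJ k hk]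
    have hI' : vertex a b I ℓ = a ℓ := by simp [vertex, hI]
    have hJ' : vertex a b J ℓ = b ℓ := by simp [vertex, hJ]
    have hab := (hB ℓ).2.1
    constructor
    · have := hQ.mono ℓ _ _ (hB.inCube_vertex I) (hB.inCube_vertex J) hv
        (by rw [hI', hJ']; exact hab.le)
      linarith
    · have hl := hQ.lip _ _ (hB.inCube_vertex J) (hB.inCube_vertex I)
      rw [Finset.sum_eq_single ℓ (fun k _ hk => by simp [hv k hk]) (by simp), hI', hJ',
        abs_of_pos (sub_pos.2 hab)] at hl
      exact (le_abs_self _).trans hl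
  · intro I
    have : Nonempty (Fin d) := ⟨⟨0, hd⟩⟩
    have hu := hB.inCube_vertex I
    exact ⟨max_le (hQ.mem _ hu).1 (hQ.Gd_le hd hu), le_ciInf fun i => hQ.le_coord hu i⟩

/-- The edge inequalities, summed along a monotone lattice path from `I` to `J`. -/
theorem Feasible2.path {d : ℕ} {a b : Fin d → ℝ} {q : (Fin d → Bool) → ℝ}
    (hf : Feasible2 a b q) {I J : Fin d → Bool} (hIJ : ∀ k, I k = true → J k = true) :
    q I ≤ q J ∧ q J ≤ q I + ∑ k, (vertex a b J k - vertex a b I k) := by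
  have key : ∀ s : Finset (Fin d), q I ≤ q (fun k => if k ∈ s then J k else I k) ∧
      q (fun k => if k ∈ s then J k else I k)
        ≤ q I + ∑ k ∈ s, (vertex a b J k - vertex a b I k) := by
    intro s
    induction s using Finset.induction_on with
    | empty => simp
    | insert ℓ s hℓ ih =>
      rw [Finset.sum_insert hℓ]
      by_cases h : I ℓ = J ℓ
      · have e : (fun k => if k ∈ insert ℓ s then J k else I k)
            = fun k => if k ∈ s then J k else I k := by
          funext k
          by_cases hk : k = ℓ
          · subst hk; simp [hℓ, h]
          · simp [hk]
        have e2 : vertex a b J ℓ - vertex a b I ℓ = 0 := by simp [vertex, h]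
        rw [e, e2]
        simpa using ih
      · have hI : I ℓ = false := by
          by_contra h'
          rw [Bool.not_eq_false] at h'
          exact h (h'.trans (hIJ ℓ h').symm)
        have hJ : J ℓ = true := by
          by_contra h'
          rw [Bool.not_eq_true] at h'
          exact h (hI.trans h'.symm)
        have e2 : vertex a b J ℓ - vertex a b I ℓ = b ℓ - a ℓ := by simp [vertex, hI, hJ]
        have := hf.2.1 ℓ (fun k => if k ∈ s then J k else I k)
          (fun k => if k ∈ insert ℓ s then J k else I k)
          ⟨by simp [hℓ, hI], by simp [hJ], fun k hk => by simp [hk]⟩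
        rw [e2]
        constructor <;> linarith [ih.1, ih.2]
  simpa using key Finset.univ

theorem Feasible2.le_add {d : ℕ} {a b : Fin d → ℝ} {q : (Fin d → Bool) → ℝ}
    (hf : Feasible2 a b q) (I J : Fin d → Bool) :
    q J ≤ q I + ∑ k, max (vertex a b J k - vertex a b I k) 0 := by
  have h1 := (hf.path (I := J) (J := fun k => I k || J k) (by simp +contextual)).1
  have h2 := (hf.path (I := I) (J := fun k => I k || J k) (by simp +contextual)).2
  have e : ∀ k, vertex a b (fun k => I k || J k) k - vertex a b I k
      = max (vertex a b J k - vertex a b I k) 0 := by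
    intro k
    have := (hf.1 k).2.1
    cases hI : I k <;> cases hJ : J k <;> simp [vertex, hI, hJ, this.le]
  rw [Finset.sum_congr rfl fun k _ => e k] at h2
  exact h1.trans h2

/-- The term `q_I + ∑ₖ (x_k - (x_I)_k)⁺`: the largest function that is nondecreasing, 1-Lipschitz
for the `ℓ¹`-norm and equal to `q_I` at `x_I`. -/
noncomputable def cone {d : ℕ} (a b : Fin d → ℝ) (q : (Fin d → Bool) → ℝ) (I : Fin d → Bool)
    (x : Fin d → ℝ) : ℝ :=
  q I + ∑ k, max (x k - vertex a b I k) 0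

/-- The extension of vertex values `q` to the cube: the lower envelope of `H_d` and all the
cones based at the vertices. -/
noncomputable def extension {d : ℕ} (a b : Fin d → ℝ) (q : (Fin d → Bool) → ℝ)
    (x : Fin d → ℝ) : ℝ :=
  min (Hd x) (⨅ I, cone a b q I x)

theorem Hd_le {d : ℕ} (x : Fin d → ℝ) (i : Fin d) : Hd x ≤ x i :=
  ciInf_le (Set.finite_range _).bddBelow i

section extension

variable {d : ℕ} {a b : Fin d → ℝ} {q : (Fin d → Bool) → ℝ}

theorem extension_le_coord (x : Fin d → ℝ) (i : Fin d) : extension a b q x ≤ x i :=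
  (min_le_left _ _).trans (Hd_le x i)

theorem extension_le_cone (x : Fin d → ℝ) (I : Fin d → Bool) :
    extension a b q x ≤ cone a b q I x :=
  (min_le_right _ _).trans (ciInf_le (Set.finite_range _).bddBelow I)

theorem le_extension (hd : 0 < d) {x : Fin d → ℝ} {t : ℝ} (h1 : ∀ i, t ≤ x i)
    (h2 : ∀ I, t ≤ cone a b q I x) : t ≤ extension a b q x := by
  have : Nonempty (Fin d) := ⟨⟨0, hd⟩⟩
  exact le_min (le_ciInf h1) (le_ciInf h2)

/-- Monotonicity and the Lipschitz condition at once: the extension grows by at most the total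
increase of the coordinates. -/
theorem extension_le_add (hd : 0 < d) (u v : Fin d → ℝ) :
    extension a b q u ≤ extension a b q v + ∑ i, max (u i - v i) 0 := by
  rw [← sub_le_iff_le_add]
  apply le_extension hd
  · intro i
    have h1 := extension_le_coord (a := a) (b := b) (q := q) u i
    have h2 : max (u i - v i) 0 ≤ ∑ i, max (u i - v i) 0 :=
      Finset.single_le_sum (f := fun i => max (u i - v i) 0)
        (fun _ _ => le_max_right _ _) (Finset.mem_univ i)
    linarith [le_max_left (u i - v i) 0]
  · intro I
    have h1 := extension_le_cone (a := a) (b := b) (q := q) u I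
    have h2 : ∑ k, max (u k - vertex a b I k) 0
        ≤ ∑ k, max (v k - vertex a b I k) 0 + ∑ k, max (u k - v k) 0 := by
      rw [← Finset.sum_add_distrib]
      refine Finset.sum_le_sum fun k _ => max_le ?_ ?_
      · linarith [le_max_left (v k - vertex a b I k) 0, le_max_left (u k - v k) 0]
      · exact add_nonneg (le_max_right _ _) (le_max_right _ _)
    unfold cone at *
    linarith

theorem Feasible2.cone_nonneg (hf : Feasible2 a b q) (I : Fin d → Bool) (x : Fin d → ℝ) :
    0 ≤ cone a b q I x :=
  add_nonneg ((le_max_left _ _).trans (hf.2.2 I).1)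
    (Finset.sum_nonneg fun _ _ => le_max_right _ _)

theorem Feasible2.Gd_le_cone (hf : Feasible2 a b q) (I : Fin d → Bool) (x : Fin d → ℝ) :
    Gd x ≤ cone a b q I x := by
  have h1 := (le_max_right _ _).trans (hf.2.2 I).1
  have h2 : ∑ k, (x k - vertex a b I k) ≤ ∑ k, max (x k - vertex a b I k) 0 :=
    Finset.sum_le_sum fun k _ => le_max_left _ _
  rw [Finset.sum_sub_distrib] at h2
  unfold Gd at *
  unfold cone
  linarith

theorem isQuasiCopula_extension (hd : 0 < d) (hf : Feasible2 a b q) :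
    IsQuasiCopula d (extension a b q) where
  mem u hu := ⟨le_extension hd (fun i => (hu i).1) fun I => hf.cone_nonneg I u,
    (extension_le_coord u ⟨0, hd⟩).trans (hu _).2⟩
  bc0 u hu := by
    rintro ⟨i, hi⟩
    exact le_antisymm ((extension_le_coord u i).trans hi.le)
      (le_extension hd (fun i => (hu i).1) fun I => hf.cone_nonneg I u)
  bc1 i t ht := by
    apply le_antisymm
    · simpa using extension_le_coord (a := a) (b := b) (q := q)
        (fun j => if j = i then t else 1) i
    · apply le_extension hd
      · intro j
        split_ifs
        · exact le_rfl
        · exact ht.2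
      · intro I
        refine le_trans (le_of_eq ?_) (hf.Gd_le_cone I _)
        have e : ∀ j : Fin d, (if j = i then t else 1) = 1 + if j = i then t - 1 else 0 := by
          intro j
          split_ifs <;> ring
        unfold Gd
        rw [Finset.sum_congr rfl fun j _ => e j, Finset.sum_add_distrib]
        simp
  mono i u v _ _ huv hi := by
    have h := extension_le_add (a := a) (b := b) (q := q) hd u v
    have e : ∑ k, max (u k - v k) 0 = 0 := by
      refine Finset.sum_eq_zero fun k _ => max_eq_right ?_
      by_cases hk : k = i
      · subst hk; linarith
      · rw [huv k hk]; simp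
    linarith
  lip u v _ _ := by
    have h1 := extension_le_add (a := a) (b := b) (q := q) hd u v
    have h2 := extension_le_add (a := a) (b := b) (q := q) hd v u
    have h3 : ∑ k, max (u k - v k) 0 ≤ ∑ k, |u k - v k| :=
      Finset.sum_le_sum fun k _ => max_le (le_abs_self _) (abs_nonneg _)
    have h4 : ∑ k, max (v k - u k) 0 ≤ ∑ k, |u k - v k| :=
      Finset.sum_le_sum fun k _ =>
        max_le (abs_sub_comm (u k) (v k) ▸ le_abs_self _) (abs_nonneg _)
    rw [abs_le]
    constructor <;> linarith

theorem extension_vertex (hd : 0 < d) (hf : Feasible2 a b q) (J : Fin d → Bool) :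
    extension a b q (vertex a b J) = q J := by
  apply le_antisymm
  · simpa [cone] using extension_le_cone (a := a) (b := b) (q := q) (vertex a b J) J
  · exact le_extension hd (fun i => (hf.2.2 J).2.trans (Hd_le _ i)) fun I => hf.le_add I J

end extension

/-- if an optimal solution to the linear program (on the `2^d`
grid) has `b*_i = 1` for all `i`, then its value is the minimal `Q`-volume over
all `d`-quasi-copulas and all `d`-boxes. -/
theorem LP_optimal_is_minimal_volume
    (d : ℕ) (hd : 2 ≤ d) (a b : Fin d → ℝ) (q : (Fin d → Bool) → ℝ)
    (hfeas : Feasible2 a b q)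
    (hopt : ∀ (a' b' : Fin d → ℝ) (q' : (Fin d → Bool) → ℝ),
        Feasible2 a' b' q' → Vq q ≤ Vq q')
    (hb : ∀ i, b i = 1) :
    (∀ (Q : (Fin d → ℝ) → ℝ) (a' b' : Fin d → ℝ), IsQuasiCopula d Q →
        IsBox a' b' → Vq q ≤ boxVolume Q a' b') ∧
    (∃ (Q : (Fin d → ℝ) → ℝ) (a' b' : Fin d → ℝ), IsQuasiCopula d Q ∧
        IsBox a' b' ∧ boxVolume Q a' b' = Vq q) := by
  have hd0 : 0 < d := by omega
  refine ⟨fun Q a' b' hQ hB => hopt a' b' _ (feasible_of_isQuasiCopula hd0 hQ hB),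
    extension a b q, a, b, isQuasiCopula_extension hd0 hfeas, hfeas.1, ?_⟩
  unfold boxVolume Vq
  simp only [extension_vertex hd0 hfeas]

end QC
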